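/- arXiv:1910.09500 — 2 statements merged into one kernel-verified Lean document; each statement's English description precedes it below -/
import Mathlib

section
/- Let λ : ℤ₊ → ℝ satisfy (UB) and let N ≥ 1. The function (y,x) ↦ 𝔥_N(y) on W^{N,N+1} is harmonic for the two-level kernel: for all t ≥ 0 and (y,x) ∈ W^{N,N+1}, Σ_{(y',x') ∈ W^{N,N+1}} U_t^{N,N+1}[(y,x),(y',x')] · 𝔥_N(y') = 𝔥_N(y), the series converging absolutely. -/
open Complex MeasureTheory Finset
open scoped Real ComplexOrder

/-- ψ_x(w) = ∏_{k=0}^{x} λ(k)/(λ(k)−w). -/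
noncomputable def psiF (lam : ℕ → ℝ) (x : ℕ) (w : ℂ) : ℂ :=
  ∏ k ∈ Finset.range (x + 1), (lam k : ℂ) / ((lam k : ℂ) - w)

/-- p_x(w) = ∏_{k=0}^{x−1} (λ(k)−w)/λ(k). -/
noncomputable def pF (lam : ℕ → ℝ) (x : ℕ) (w : ℂ) : ℂ :=
  ∏ k ∈ Finset.range x, (((lam k : ℂ) - w) / (lam k : ℂ))

/-- e^{tL}(x,y) := −(1/λ(y))·(1/(2πi)) ∮_{|w|=R} ψ_y(w) p_x(w) e^{−tw} dw,
the contour being the counterclockwise circle of radius R centred at 0. -/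
noncomputable def eL (lam : ℕ → ℝ) (R t : ℝ) (x y : ℕ) : ℂ :=
  -(1 / (lam y : ℂ)) * ((2 * (Real.pi : ℂ) * Complex.I)⁻¹ *
    ∮ w in C(0, R), psiF lam y w * pF lam x w * Complex.exp (-(t : ℂ) * w))

/-- y ≺ x : interlacing, x_1 ≤ y_1 < x_2 ≤ y_2 < ⋯ ≤ y_N < x_{N+1}.
(Membership of (y,x) in W^{N,N+1} is exactly this condition.) -/
def Interlace {N : ℕ} (y : Fin N → ℕ) (x : Fin (N + 1) → ℕ) : Prop :=
  ∀ i : Fin N, x i.castSucc ≤ y i ∧ y i < x i.succ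

instance {N : ℕ} (y : Fin N → ℕ) (x : Fin (N + 1) → ℕ) : Decidable (Interlace y x) :=
  inferInstanceAs (Decidable (∀ i : Fin N, x i.castSucc ≤ y i ∧ y i < x i.succ))

/-- The two-level Karlin–McGregor block determinant kernel
U_t^{N,N+1}[(y,x),(y',x')] = det [[A, B],[C, D]] with
A_{ij} = e^{tL}(x_i,x'_j), B_{ij} = λ(y'_j)⁻¹ (Σ_{z=0}^{y'_j} e^{tL}(x_i,z) − 1(j ≥ i)),
C_{ij} = λ(y_i)(e^{tL}(y_i,x'_j) − e^{tL}(y_i+1,x'_j)), D_{ij} = e^{tL}(y_i,y'_j). -/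
noncomputable def Ut (lam : ℕ → ℝ) (R t : ℝ) (N : ℕ)
    (y : Fin N → ℕ) (x : Fin (N + 1) → ℕ)
    (y' : Fin N → ℕ) (x' : Fin (N + 1) → ℕ) : ℂ :=
  (Matrix.fromBlocks
    (Matrix.of fun i j => eL lam R t (x i) (x' j))
    (Matrix.of fun (i : Fin (N + 1)) (j : Fin N) =>
      (1 / (lam (y' j) : ℂ)) *
        ((∑ z ∈ Finset.range (y' j + 1), eL lam R t (x i) z)
          - if (i : ℕ) ≤ (j : ℕ) then 1 else 0))
    (Matrix.of fun (i : Fin N) (j : Fin (N + 1)) =>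
      (lam (y i) : ℂ) * (eL lam R t (y i) (x' j) - eL lam R t (y i + 1) (x' j)))
    (Matrix.of fun i j => eL lam R t (y i) (y' j))).det

/-- 𝔥_N, defined recursively: 𝔥_1 ≡ 1 and 𝔥_{N+1}(x) = Σ_{y ≺ x} ∏ λ(y_i)⁻¹ 𝔥_N(y)
(so 𝔥_1(x) = 1 since the empty interlacing condition is vacuous and the unique
y : Fin 0 → ℕ contributes the empty product). -/
noncomputable def hfun (lam : ℕ → ℝ) : (N : ℕ) → (Fin N → ℕ) → ℝ
  | 0, _ => 1
  | (N + 1), x => ∑' y : { y : Fin N → ℕ // Interlace y x },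
      (∏ i, (lam (y.1 i))⁻¹) * hfun lam N y.1

/-- The product of the first `n` factors `λ(k)/(λ(k)-w)`. -/
noncomputable def rateProd (lam : ℕ → ℝ) (n : ℕ) (w : ℂ) : ℂ :=
  ∏ k ∈ Finset.range n, (lam k : ℂ) / ((lam k : ℂ) - w)

/-- The distribution function `∑_{z<n} e^{tL}(x,z)`. -/
noncomputable def eLCum (lam : ℕ → ℝ) (R t : ℝ) (x n : ℕ) : ℂ :=
  ∑ z ∈ Finset.range n, eL lam R t x z

lemma rate_sub_ne_zero {a M : ℝ} {w : ℂ} (h0 : 0 < a) (h : a ≤ M) (hw : M < ‖w‖) :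
    (a : ℂ) - w ≠ 0 := by
  intro h'
  rw [sub_eq_zero] at h'
  rw [← h', Complex.norm_real, Real.norm_eq_abs, abs_of_pos h0] at hw
  linarith

lemma differentiableAt_rateProd {lam : ℕ → ℝ} {w : ℂ} (h : ∀ k, (lam k : ℂ) - w ≠ 0) (n : ℕ) :
    DifferentiableAt ℂ (rateProd lam n) w := by
  unfold rateProd
  refine DifferentiableAt.fun_finsetProd fun k _ => ?_
  exact (differentiableAt_const _).div ((differentiableAt_const _).sub differentiableAt_id) (h k)

lemma differentiable_pF_mul_exp (lam : ℕ → ℝ) (t : ℝ) (x : ℕ) :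
    Differentiable ℂ fun w => pF lam x w * Complex.exp (-(t : ℂ) * w) := by
  unfold pF
  fun_prop

lemma norm_rateProd_le {lam : ℕ → ℝ} {M ρ : ℝ} (h0 : ∀ k, 0 < lam k) (hub : ∀ k, lam k ≤ M)
    (hρ : 0 < ρ) {w : ℂ} (hw : M + M / ρ ≤ ‖w‖) (n : ℕ) : ‖rateProd lam n w‖ ≤ ρ ^ n := by
  have hM : 0 < M := (h0 0).trans_le (hub 0)
  unfold rateProd
  rw [norm_prod]
  refine (Finset.prod_le_prod (fun _ _ => norm_nonneg _) (g := fun _ => ρ) fun k _ => ?_).trans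
    (by simp)
  have h1 : ‖w‖ - lam k ≤ ‖(lam k : ℂ) - w‖ := by
    have := norm_sub_norm_le w (lam k : ℂ)
    rw [Complex.norm_real, Real.norm_eq_abs, abs_of_pos (h0 k), norm_sub_rev] at this
    exact this
  have h2 : M / ρ ≤ ‖(lam k : ℂ) - w‖ := by linarith [hub k]
  have h3 : 0 < M / ρ := by positivity
  rw [norm_div, Complex.norm_real, Real.norm_eq_abs, abs_of_pos (h0 k),
    div_le_iff₀ (h3.trans_le h2)]
  calc lam k ≤ M := hub k
    _ = ρ * (M / ρ) := by field_simp
    _ ≤ _ := by gcongr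

/-- Enlarging the contour gives geometric decay with an arbitrary ratio. -/
lemma exists_norm_circleIntegral_rateProd_le {lam : ℕ → ℝ} {M R : ℝ} (h0 : ∀ k, 0 < lam k)
    (hub : ∀ k, lam k ≤ M) (hR : M < R) {g : ℂ → ℂ} (hg : ∀ w ≠ 0, DifferentiableAt ℂ g w)
    {ρ : ℝ} (hρ : 0 < ρ) :
    ∃ C : ℝ, 0 ≤ C ∧ ∀ n, ‖∮ w in C(0, R), rateProd lam n w * g w‖ ≤ C * ρ ^ n := by
  have hM : 0 < M := (h0 0).trans_le (hub 0)
  set R' : ℝ := R + M + M / ρ with hR'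
  have hq : 0 < M / ρ := by positivity
  have hRR' : R ≤ R' := by linarith
  have hR'0 : 0 ≤ R' := by linarith
  have hd : ∀ n, ∀ w : ℂ, M < ‖w‖ → DifferentiableAt ℂ (fun w => rateProd lam n w * g w) w := by
    intro n w hw
    refine (differentiableAt_rateProd (fun k => rate_sub_ne_zero (h0 k) (hub k) hw) n).mul
      (hg w ?_)
    rintro rfl
    simp at hw
    linarith
  have hgc : ContinuousOn g (Metric.sphere 0 R') := by
    intro w hw
    refine (hg w ?_).continuousAt.continuousWithinAt
    rintro rfl
    simp at hw
    linarith
  obtain ⟨G, hG⟩ := (isCompact_sphere (0 : ℂ) R').exists_bound_of_continuousOn hgc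
  refine ⟨2 * π * R' * max G 0, by positivity, fun n => ?_⟩
  rw [← Complex.circleIntegral_eq_of_differentiable_on_annulus_off_countable
    (by linarith : 0 < R) hRR' Set.countable_empty]
  · refine (circleIntegral.norm_integral_le_of_norm_le_const hR'0
      (C := ρ ^ n * max G 0) fun w hw => ?_).trans (le_of_eq (by ring))
    rw [norm_mul]
    have hw' : ‖w‖ = R' := by simpa using hw
    gcongr
    · exact norm_rateProd_le h0 hub hρ (by linarith) n
    · exact (hG w hw).trans (le_max_left _ _)
  · intro w hw
    refine (hd n w ?_).continuousAt.continuousWithinAt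
    have : R ≤ ‖w‖ := by simpa using hw.2
    linarith
  · intro w hw
    refine hd n w ?_
    have : R < ‖w‖ := by simpa using hw.1.2
    linarith

lemma exists_norm_eL_le {lam : ℕ → ℝ} {s M R : ℝ} (hs : 0 < s) (hlb : ∀ k, s ≤ lam k)
    (hub : ∀ k, lam k ≤ M) (hR : M < R) (t : ℝ) {ρ : ℝ} (hρ : 0 < ρ) (x : ℕ) :
    ∃ C : ℝ, 0 ≤ C ∧ ∀ z, ‖eL lam R t x z‖ ≤ C * ρ ^ z := by
  have h0 : ∀ k, 0 < lam k := fun k => hs.trans_le (hlb k)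
  obtain ⟨C, hC, h⟩ := exists_norm_circleIntegral_rateProd_le h0 hub hR
    (fun w _ => differentiable_pF_mul_exp lam t x w) hρ
  refine ⟨s⁻¹ * (‖(2 * (π : ℂ) * Complex.I)⁻¹‖ * (C * ρ)), by positivity, fun z => ?_⟩
  have h1 : ∀ w, psiF lam z w * pF lam x w * Complex.exp (-(t : ℂ) * w) =
      rateProd lam (z + 1) w * (pF lam x w * Complex.exp (-(t : ℂ) * w)) := fun w => mul_assoc _ _ _
  unfold eL
  simp_rw [h1]
  rw [norm_mul, norm_mul, norm_neg, one_div, norm_inv, Complex.norm_real, Real.norm_eq_abs,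
    abs_of_pos (h0 z)]
  calc _ ≤ s⁻¹ * (‖(2 * (π : ℂ) * Complex.I)⁻¹‖ * (C * ρ ^ (z + 1))) := by
        gcongr
        · exact hlb z
        · exact h _
    _ = _ := by ring

/-- Contour formula for the distribution function. -/
lemma eLCum_eq {lam : ℕ → ℝ} {M R : ℝ} (h0 : ∀ k, 0 < lam k)
    (hub : ∀ k, lam k ≤ M) (hR : M < R) (t : ℝ) (x n : ℕ) :
    eLCum lam R t x n = 1 - (2 * (π : ℂ) * Complex.I)⁻¹ *
      ∮ w in C(0, R), rateProd lam n w * (pF lam x w * Complex.exp (-(t : ℂ) * w) / w) := by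
  have hM : 0 < M := (h0 0).trans_le (hub 0)
  have hR0 : 0 < R := hM.trans hR
  have hpi : (2 * (π : ℂ) * Complex.I) ≠ 0 := Complex.two_pi_I_ne_zero
  induction n with
  | zero =>
    have h := ((differentiable_pF_mul_exp lam t x).diffContOnCl
      (s := Metric.ball 0 R)).circleIntegral_sub_inv_smul (w := 0) (by simpa using hR0)
    have h1 : ∀ w, rateProd lam 0 w * (pF lam x w * Complex.exp (-(t : ℂ) * w) / w) =
        (w - 0)⁻¹ • (pF lam x w * Complex.exp (-(t : ℂ) * w)) := by
      intro w
      simp [rateProd, div_eq_inv_mul]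
    have h2 : pF lam x 0 = 1 := by
      unfold pF
      refine Finset.prod_eq_one fun k _ => ?_
      rw [sub_zero, div_self]
      exact_mod_cast (h0 k).ne'
    simp_rw [h1, h]
    simp [eLCum, h2]
    field_simp
    simp
  | succ n ih =>
    have hint : ∀ n, CircleIntegrable
        (fun w => rateProd lam n w * (pF lam x w * Complex.exp (-(t : ℂ) * w) / w)) 0 R := by
      intro n
      refine ContinuousOn.circleIntegrable hR0.le fun w hw => ?_
      have hw' : ‖w‖ = R := by simpa using hw
      have hw0 : w ≠ 0 := by
        rintro rfl
        simp at hw'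
        linarith
      exact ((differentiableAt_rateProd
        (fun k => rate_sub_ne_zero (h0 k) (hub k) (by linarith)) n).mul
        ((differentiable_pF_mul_exp lam t x w).div differentiableAt_id
          hw0)).continuousAt.continuousWithinAt
    have hstep : eL lam R t x n = -((2 * (π : ℂ) * Complex.I)⁻¹ *
        ((∮ w in C(0, R), rateProd lam (n + 1) w *
            (pF lam x w * Complex.exp (-(t : ℂ) * w) / w)) -
          ∮ w in C(0, R), rateProd lam n w *
            (pF lam x w * Complex.exp (-(t : ℂ) * w) / w))) := by
      rw [← circleIntegral.integral_sub (hint _) (hint _)]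
      unfold eL
      rw [mul_left_comm, neg_mul, ← smul_eq_mul (1 / (lam n : ℂ)),
        ← circleIntegral.integral_smul, mul_neg]
      congr 2
      refine circleIntegral.integral_congr hR0.le fun w hw => ?_
      have hw' : ‖w‖ = R := by simpa using hw
      have hw0 : w ≠ 0 := by
        rintro rfl
        simp at hw'
        linarith
      have hk := rate_sub_ne_zero (h0 n) (hub n) (w := w) (by linarith)
      have hl : (lam n : ℂ) ≠ 0 := by exact_mod_cast (h0 n).ne'
      simp only [psiF, rateProd, Finset.prod_range_succ, smul_eq_mul]
      field_simp
      ring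
    unfold eLCum at ih ⊢
    rw [Finset.sum_range_succ, ih, hstep]
    ring

/-- The intertwining of `e^{tL}` with the difference operator. -/
lemma mul_eLCum_sub_eLCum_succ {lam : ℕ → ℝ} {M R : ℝ} (h0 : ∀ k, 0 < lam k)
    (hub : ∀ k, lam k ≤ M) (hR : M < R) (t : ℝ) (x z : ℕ) :
    (lam x : ℂ) * (eLCum lam R t x (z + 1) - eLCum lam R t (x + 1) (z + 1)) =
      (lam z : ℂ) * eL lam R t x z := by
  have hM : 0 < M := (h0 0).trans_le (hub 0)
  have hR0 : 0 < R := hM.trans hR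
  have hint : ∀ x, CircleIntegrable (fun w => rateProd lam (z + 1) w *
      (pF lam x w * Complex.exp (-(t : ℂ) * w) / w)) 0 R := by
    intro x
    refine ContinuousOn.circleIntegrable hR0.le fun w hw => ?_
    have hw' : ‖w‖ = R := by simpa using hw
    have hw0 : w ≠ 0 := by
      rintro rfl
      simp at hw'
      linarith
    exact ((differentiableAt_rateProd
      (fun k => rate_sub_ne_zero (h0 k) (hub k) (by linarith)) _).mul
      ((differentiable_pF_mul_exp lam t x w).div differentiableAt_id
        hw0)).continuousAt.continuousWithinAt
  have hl : ∀ k, (lam k : ℂ) ≠ 0 := fun k => by exact_mod_cast (h0 k).ne'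
  rw [eLCum_eq h0 hub hR, eLCum_eq h0 hub hR, sub_sub_sub_cancel_left, ← mul_sub,
    ← circleIntegral.integral_sub (hint _) (hint _), mul_left_comm,
    ← smul_eq_mul (lam x : ℂ), ← circleIntegral.integral_smul]
  unfold eL
  have : ∀ J : ℂ, (lam z : ℂ) * (-(1 / (lam z : ℂ)) * J) = -J := fun J => by
    have := hl z
    field_simp
  rw [this, ← mul_neg, ← neg_one_mul (circleIntegral _ _ _), ← smul_eq_mul (-1 : ℂ),
    ← circleIntegral.integral_smul]
  congr 1
  refine circleIntegral.integral_congr hR0.le fun w hw => ?_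
  have hw' : ‖w‖ = R := by simpa using hw
  have hw0 : w ≠ 0 := by
    rintro rfl
    simp at hw'
    linarith
  have := hl x
  simp only [psiF, rateProd, pF, Finset.prod_range_succ _ x, smul_eq_mul]
  field_simp
  ring

lemma summable_norm_eL {lam : ℕ → ℝ} {s M R : ℝ} (hs : 0 < s) (hlb : ∀ k, s ≤ lam k)
    (hub : ∀ k, lam k ≤ M) (hR : M < R) (t : ℝ) (x : ℕ) :
    Summable fun z => ‖eL lam R t x z‖ := by
  obtain ⟨C, _, h⟩ := exists_norm_eL_le hs hlb hub hR t (by norm_num : (0 : ℝ) < 1 / 2) x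
  exact Summable.of_nonneg_of_le (fun _ => norm_nonneg _) h
    (summable_geometric_two.mul_left C)

lemma hasSum_eL {lam : ℕ → ℝ} {s M R : ℝ} (hs : 0 < s) (hlb : ∀ k, s ≤ lam k)
    (hub : ∀ k, lam k ≤ M) (hR : M < R) (t : ℝ) (x : ℕ) :
    HasSum (eL lam R t x) 1 := by
  have h0 : ∀ k, 0 < lam k := fun k => hs.trans_le (hlb k)
  obtain ⟨C, hC, h⟩ := exists_norm_circleIntegral_rateProd_le h0 hub hR
    (g := fun w => pF lam x w * Complex.exp (-(t : ℂ) * w) / w)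
    (fun w hw => (differentiable_pF_mul_exp lam t x w).div differentiableAt_id hw)
    (by norm_num : (0 : ℝ) < 1 / 2)
  refine (summable_norm_eL hs hlb hub hR t x).of_norm.hasSum_iff_tendsto_nat.2 ?_
  have h1 : Filter.Tendsto (fun n => ∮ w in C(0, R), rateProd lam n w *
      (pF lam x w * Complex.exp (-(t : ℂ) * w) / w)) Filter.atTop (nhds 0) := by
    refine squeeze_zero_norm h ?_
    simpa using (tendsto_pow_atTop_nhds_zero_of_lt_one
      (by norm_num : (0 : ℝ) ≤ 1 / 2) (by norm_num)).const_mul C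
  have h2 := (h1.const_mul (2 * (π : ℂ) * Complex.I)⁻¹).const_sub 1
  simp only [mul_zero, sub_zero] at h2
  exact h2.congr fun n => (eLCum_eq h0 hub hR t x n).symm

lemma summable_norm_prod_and_hasSum_prod {n : ℕ} (f : Fin n → ℕ → ℂ)
    (hf : ∀ j, Summable fun z => ‖f j z‖) :
    (Summable fun x : Fin n → ℕ => ‖∏ j, f j (x j)‖) ∧
      HasSum (fun x : Fin n → ℕ => ∏ j, f j (x j)) (∏ j, ∑' z, f j z) := by
  induction n with
  | zero =>
    refine ⟨(hasSum_unique _).summable, ?_⟩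
    convert hasSum_unique _ using 1
    · simp
    · infer_instance
  | succ n ih =>
    obtain ⟨h1, h2⟩ := ih (fun j => f j.succ) fun j => hf j.succ
    have e1 : ∀ p : ℕ × (Fin n → ℕ), ∏ j, f j (Fin.consEquiv (fun _ => ℕ) p j) =
        f 0 p.1 * ∏ j, f j.succ (p.2 j) := fun p => by
      simp [Fin.prod_univ_succ, Fin.consEquiv]
    constructor
    · rw [← (Fin.consEquiv fun _ => ℕ).summable_iff]
      refine ((hf 0).mul_norm h1).congr fun p => ?_
      rw [Function.comp_apply, e1]
    · rw [← (Fin.consEquiv fun _ => ℕ).hasSum_iff, Fin.prod_univ_succ, ← h2.tsum_eq]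
      have := (summable_mul_of_summable_norm (hf 0) h1).hasSum
      rw [← tsum_mul_tsum_of_summable_norm (hf 0) h1] at this
      exact this.congr_fun e1

/-- Summing a determinant over independent entries of its first `n` columns. -/
lemma hasSum_det_fromBlocks {n : ℕ} {κ : Type*} [Fintype κ] [DecidableEq κ]
    (a : Fin n → ℕ → ℂ) (c : κ → ℕ → ℂ) (b : Matrix (Fin n) κ ℂ) (d : Matrix κ κ ℂ)
    (S : Fin n → Set ℕ) (ha : ∀ i, Summable fun z => ‖a i z‖)
    (hc : ∀ k, Summable fun z => ‖c k z‖) (Q : (Fin n → ℕ) → Prop) [DecidablePred Q]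
    (hQ : ∀ x, Q x ↔ ∀ j, x j ∈ S j) :
    HasSum (fun x : Fin n → ℕ => if Q x then
        (Matrix.fromBlocks (Matrix.of fun i j => a i (x j)) b
          (Matrix.of fun k j => c k (x j)) d).det else 0)
      (Matrix.fromBlocks (Matrix.of fun i j => ∑' z, (S j).indicator (a i) z) b
          (Matrix.of fun k j => ∑' z, (S j).indicator (c k) z) d).det := by
  classical
  set g : Fin n ⊕ κ → Fin n → ℕ → ℂ := fun r j => (S j).indicator (Sum.elim a c r) with hg
  have hgs : ∀ r j, Summable fun z => ‖g r j z‖ := by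
    intro r j
    have : Summable fun z => ‖Sum.elim a c r z‖ := by
      rcases r with i | k
      · exact ha i
      · exact hc k
    exact Summable.of_nonneg_of_le (fun _ => norm_nonneg _)
      (fun z => norm_indicator_le_norm_self _ _) this
  have key : HasSum (fun x : Fin n → ℕ =>
      (Matrix.fromBlocks (Matrix.of fun i j => g (Sum.inl i) j (x j)) b
          (Matrix.of fun k j => g (Sum.inr k) j (x j)) d).det)
      (Matrix.fromBlocks (Matrix.of fun i j => ∑' z, g (Sum.inl i) j z) b
          (Matrix.of fun k j => ∑' z, g (Sum.inr k) j z) d).det := by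
    have e : ∀ m : Fin n ⊕ κ → Fin n → ℂ,
        (Matrix.fromBlocks (Matrix.of fun i j => m (Sum.inl i) j) b
          (Matrix.of fun k j => m (Sum.inr k) j) d).det =
        ∑ σ : Equiv.Perm (Fin n ⊕ κ), Equiv.Perm.sign σ •
          ((∏ j, m (σ (Sum.inl j)) j) * ∏ k, Sum.elim b d (σ (Sum.inr k)) k) := by
      intro m
      rw [Matrix.det_apply]
      refine Finset.sum_congr rfl fun σ _ => ?_
      rw [Fintype.prod_sum_type]
      congr 2
      · refine Finset.prod_congr rfl fun j _ => ?_
        rcases σ (Sum.inl j) with i | k <;> rfl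
      · refine Finset.prod_congr rfl fun j _ => ?_
        rcases σ (Sum.inr j) with i | k <;> rfl
    rw [e fun r j => ∑' z, g r j z]
    have h := hasSum_sum (s := Finset.univ) fun (σ : Equiv.Perm (Fin n ⊕ κ)) _ =>
      (((summable_norm_prod_and_hasSum_prod (fun j => g (σ (Sum.inl j)) j)
        fun j => hgs _ j).2.mul_right
          (∏ k, Sum.elim b d (σ (Sum.inr k)) k)).const_smul (Equiv.Perm.sign σ))
    exact h.congr_fun fun x => e fun r j => g r j (x j)
  refine key.congr_fun fun x => ?_
  by_cases h : Q x
  · have h' := (hQ x).1 h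
    simp [h, hg, Set.indicator_of_mem (h' _)]
  · rw [if_neg h]
    rw [hQ] at h
    push Not at h
    obtain ⟨j, hj⟩ := h
    refine (Matrix.det_eq_zero_of_column_eq_zero (Sum.inl j) fun r => ?_).symm
    rcases r with i | k <;> simp [hg, hj]

/-- The values `x j` allowed by interlacing with `y`. -/
def interlaceCell {N : ℕ} (y : Fin N → ℕ) (j : Fin (N + 1)) : Set ℕ :=
  {z | (∀ k : Fin N, k.castSucc = j → z ≤ y k) ∧ ∀ k : Fin N, k.succ = j → y k < z}

lemma interlace_iff_mem_cell {N : ℕ} (y : Fin N → ℕ) (x : Fin (N + 1) → ℕ) :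
    Interlace y x ↔ ∀ j, x j ∈ interlaceCell y j := by
  constructor
  · rintro h j
    refine ⟨?_, ?_⟩
    · rintro k rfl
      exact (h k).1
    · rintro k rfl
      exact (h k).2
  · exact fun h k => ⟨(h _).1 k rfl, (h _).2 k rfl⟩

lemma Interlace.strictMono_left {N : ℕ} {y : Fin N → ℕ} {x : Fin (N + 1) → ℕ}
    (h : Interlace y x) : StrictMono y := by
  cases N with
  | zero => exact Subsingleton.strictMono y
  | succ n =>
    refine Fin.strictMono_iff_lt_succ.2 fun i => ?_
    have h1 := (h i.castSucc).2
    have h2 := (h i.succ).1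
    rw [← Fin.succ_castSucc] at h2
    omega

lemma Interlace.strictMono_right {N : ℕ} {y : Fin N → ℕ} {x : Fin (N + 1) → ℕ}
    (h : Interlace y x) : StrictMono x :=
  Fin.strictMono_iff_lt_succ.2 fun i => (h i).1.trans_lt (h i).2

lemma tsum_indicator_interlaceCell {N : ℕ} {y : Fin N → ℕ} (hy : StrictMono y) {f : ℕ → ℂ}
    {T : ℂ} (hf : HasSum f T) (j : Fin (N + 1)) :
    ∑' z, (interlaceCell y j).indicator f z =
      (Fin.snoc (fun k => ∑ z ∈ Finset.range (y k + 1), f z) T : Fin (N + 1) → ℂ) j -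
      (Fin.cons 0 (fun k => ∑ z ∈ Finset.range (y k + 1), f z) : Fin (N + 1) → ℂ) j := by
  set U : Set ℕ := {z | ∀ k : Fin N, k.castSucc = j → z ≤ y k} with hU
  set L : Set ℕ := {z | ∃ k : Fin N, k.succ = j ∧ z ≤ y k} with hL
  have hLU : L ⊆ U := by
    rintro z ⟨k, hk, hz⟩ l hl
    refine hz.trans (hy.monotone ?_)
    have := congrArg Fin.val (hk.trans hl.symm)
    simp at this
    exact Fin.le_def.2 (by omega)
  have hS : interlaceCell y j = U \ L := by
    ext z
    simp [interlaceCell, hU, hL]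
  have hfin : ∀ k, HasSum ({z | z ≤ y k}.indicator f) (∑ z ∈ Finset.range (y k + 1), f z) := by
    intro k
    have : ∀ z, z ∉ Finset.range (y k + 1) → {z | z ≤ y k}.indicator f z = 0 := by
      intro z hz
      simp at hz
      simp
      omega
    have h := hasSum_sum_of_ne_finset_zero (L := .unconditional ℕ) this
    convert h using 1
    refine Finset.sum_congr rfl fun z hz => ?_
    simp at hz
    rw [Set.indicator_of_mem]
    simp
    omega
  have hU' : HasSum (U.indicator f)
      ((Fin.snoc (fun k => ∑ z ∈ Finset.range (y k + 1), f z) T : Fin (N + 1) → ℂ) j) := by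
    refine Fin.lastCases ?_ (fun k => ?_) j (motive := fun j => HasSum
      ({z | ∀ k : Fin N, k.castSucc = j → z ≤ y k}.indicator f)
      ((Fin.snoc (fun k => ∑ z ∈ Finset.range (y k + 1), f z) T : Fin (N + 1) → ℂ) j))
    · simpa [Fin.castSucc_ne_last] using hf
    · simpa using hfin k
  have hL' : HasSum (L.indicator f)
      ((Fin.cons 0 (fun k => ∑ z ∈ Finset.range (y k + 1), f z) : Fin (N + 1) → ℂ) j) := by
    refine Fin.cases ?_ (fun k => ?_) j (motive := fun j => HasSum
      ({z | ∃ k : Fin N, k.succ = j ∧ z ≤ y k}.indicator f)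
      ((Fin.cons 0 (fun k => ∑ z ∈ Finset.range (y k + 1), f z) : Fin (N + 1) → ℂ) j))
    · simp [Fin.succ_ne_zero]
    · simpa using hfin k
  rw [hS, ← (hU'.sub hL').tsum_eq]
  refine tsum_congr fun z => ?_
  rw [Set.indicator_sdiff hLU]
  rfl

/-- The matrix of the difference operator `e_k - e_{k+1}`. -/
def diffMatrix (N : ℕ) : Matrix (Fin N) (Fin (N + 1)) ℂ :=
  Matrix.of fun k j => (if j = k.castSucc then 1 else 0) - if j = k.succ then 1 else 0

lemma diffMatrix_mul_apply {N : ℕ} {κ : Type*} (B : Matrix (Fin (N + 1)) κ ℂ) (k : Fin N) (l : κ) :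
    (diffMatrix N * B) k l = B k.castSucc l - B k.succ l := by
  simp [diffMatrix, Matrix.mul_apply, sub_mul]

lemma mul_diffMatrix_apply {N : ℕ} {ι : Type*} (B : Matrix ι (Fin N) ℂ) (i : ι) (j : Fin (N + 1)) :
    (B * diffMatrix N) i j =
      (Fin.snoc (B i) 0 : Fin (N + 1) → ℂ) j - (Fin.cons 0 (B i) : Fin (N + 1) → ℂ) j := by
  simp only [diffMatrix, Matrix.mul_apply, Matrix.of_apply, mul_sub, Finset.sum_sub_distrib]
  congr 1
  · refine Fin.lastCases ?_ (fun k => ?_) j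
    · simp [(Fin.castSucc_ne_last _).symm]
    · simp
  · refine Fin.cases ?_ (fun k => ?_) j
    · simp [(Fin.succ_ne_zero _).symm]
    · simp

lemma snoc_one_sub_cons_eq {N : ℕ} (F : Fin (N + 1) → Fin N → ℂ) :
    (Matrix.of fun i j =>
      (Fin.snoc (F i) 1 : Fin (N + 1) → ℂ) j - (Fin.cons 0 (F i) : Fin (N + 1) → ℂ) j) =
    1 + (Matrix.of fun i k => F i k - if (i : ℕ) ≤ (k : ℕ) then 1 else 0) * diffMatrix N := by
  ext i j
  have hs : (Fin.snoc (F i) 1 : Fin (N + 1) → ℂ) j - (Fin.snoc (fun k => F i k -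
      if (i : ℕ) ≤ (k : ℕ) then 1 else 0) 0 : Fin (N + 1) → ℂ) j =
      if (i : ℕ) ≤ (j : ℕ) then 1 else 0 := by
    refine Fin.lastCases ?_ (fun k => ?_) j
    · simp [Fin.is_le]
    · simp
  have hc : (Fin.cons 0 (F i) : Fin (N + 1) → ℂ) j - (Fin.cons 0 (fun k => F i k -
      if (i : ℕ) ≤ (k : ℕ) then 1 else 0) : Fin (N + 1) → ℂ) j =
      if (i : ℕ) < (j : ℕ) then 1 else 0 := by
    refine Fin.cases ?_ (fun k => ?_) j
    · simp
    · simp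
  have h1 : (1 : Matrix (Fin (N + 1)) (Fin (N + 1)) ℂ) i j =
      (if (i : ℕ) ≤ (j : ℕ) then 1 else 0) - if (i : ℕ) < (j : ℕ) then 1 else 0 := by
    rw [Matrix.one_apply]
    rcases lt_trichotomy (i : ℕ) j with h | h | h
    · have : i ≠ j := fun h' => by simp [h'] at h
      simp [h, h.le, this]
    · have : i = j := Fin.ext h
      simp [this]
    · have : i ≠ j := fun h' => by simp [h'] at h
      simp [h.not_ge, this, h.not_gt]
  rw [Matrix.add_apply, mul_diffMatrix_apply, h1, ← hs, ← hc]
  simp only [Matrix.of_apply]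
  change _ = _ + ((Fin.snoc (fun k => F i k -
      if (i : ℕ) ≤ (k : ℕ) then 1 else 0) 0 : Fin (N + 1) → ℂ) j - (Fin.cons 0 (fun k => F i k -
      if (i : ℕ) ≤ (k : ℕ) then 1 else 0) : Fin (N + 1) → ℂ) j)
  ring

lemma det_snoc_one_sub_cons {N : ℕ} (F : Fin (N + 1) → Fin N → ℂ) :
    (Matrix.of fun i j =>
      (Fin.snoc (F i) 1 : Fin (N + 1) → ℂ) j - (Fin.cons 0 (F i) : Fin (N + 1) → ℂ) j).det =
    (Matrix.of fun i k : Fin N => F i.castSucc k - F i.succ k).det := by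
  rw [snoc_one_sub_cons_eq, Matrix.det_one_add_mul_comm]
  congr 1
  ext k l
  rw [Matrix.add_apply, diffMatrix_mul_apply, Matrix.one_apply]
  simp only [Matrix.of_apply, Fin.val_castSucc, Fin.val_succ]
  rcases lt_trichotomy (k : ℕ) l with h | h | h
  · have : k ≠ l := fun h' => by simp [h'] at h
    simp [h.le, this, Nat.succ_le_of_lt h]
  · have : k = l := Fin.ext h
    simp [this]
    ring
  · have : k ≠ l := fun h' => by simp [h'] at h
    simp [h.not_ge, this, show ¬ (k : ℕ) + 1 ≤ l by omega]

/-- The block determinant obtained after summing out the `x'` variables. -/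
lemma det_fromBlocks_snoc_sub_cons {N : ℕ} (F : Fin (N + 1) → Fin N → ℂ)
    (D : Matrix (Fin N) (Fin N) ℂ) (v : Fin N → ℂ) (hv : ∀ k, v k ≠ 0) :
    (Matrix.fromBlocks
      (Matrix.of fun i j =>
        (Fin.snoc (F i) 1 : Fin (N + 1) → ℂ) j - (Fin.cons 0 (F i) : Fin (N + 1) → ℂ) j)
      (Matrix.of fun (i : Fin (N + 1)) (j : Fin N) =>
        (1 / v j) * (F i j - if (i : ℕ) ≤ (j : ℕ) then 1 else 0))
      (Matrix.of fun i j =>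
        (Fin.snoc (fun k => v k * D i k) 0 : Fin (N + 1) → ℂ) j -
          (Fin.cons 0 (fun k => v k * D i k) : Fin (N + 1) → ℂ) j) D).det = D.det := by
  set B : Matrix (Fin (N + 1)) (Fin N) ℂ := Matrix.of fun (i : Fin (N + 1)) (j : Fin N) =>
        (1 / v j) * (F i j - if (i : ℕ) ≤ (j : ℕ) then 1 else 0) with hB
  set E := Matrix.diagonal v * diffMatrix N with hE
  have h1 : (Matrix.of fun i j => (Fin.snoc (F i) 1 : Fin (N + 1) → ℂ) j -
      (Fin.cons 0 (F i) : Fin (N + 1) → ℂ) j) = 1 + B * E := by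
    rw [snoc_one_sub_cons_eq, hE, ← Matrix.mul_assoc]
    congr 2
    ext i k
    rw [Matrix.mul_diagonal]
    have := hv k
    simp only [hB, Matrix.of_apply]
    field_simp
  have h2 : (Matrix.of fun i j =>
        (Fin.snoc (fun k => v k * D i k) 0 : Fin (N + 1) → ℂ) j -
          (Fin.cons 0 (fun k => v k * D i k) : Fin (N + 1) → ℂ) j) = D * E := by
    rw [hE, ← Matrix.mul_assoc]
    ext i j
    rw [mul_diffMatrix_apply]
    have : (D * Matrix.diagonal v) i = fun k => v k * D i k := by
      ext k
      rw [Matrix.mul_diagonal, mul_comm]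
    rw [this]
    rfl
  have h3 : Matrix.fromBlocks (1 + B * E) B (D * E) D =
      Matrix.fromBlocks 1 B 0 D * Matrix.fromBlocks 1 0 E 1 := by
    rw [Matrix.fromBlocks_multiply]
    simp
  rw [h1, h2, h3, Matrix.det_mul, Matrix.det_fromBlocks_zero₂₁, Matrix.det_fromBlocks_zero₁₂]
  simp

lemma norm_det_le_of_column {ι : Type*} [Fintype ι] [DecidableEq ι] (A : Matrix ι ι ℂ) (c : ι → ℝ)
    (h : ∀ i j, ‖A i j‖ ≤ c j) : ‖A.det‖ ≤ (Fintype.card ι).factorial * ∏ j, c j := by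
  rw [Matrix.det_apply]
  refine (norm_sum_le _ _).trans ((Finset.sum_le_card_nsmul _ _ (∏ j, c j) fun σ _ => ?_).trans
    (le_of_eq ?_))
  · have : ‖Equiv.Perm.sign σ • ∏ i, A (σ i) i‖ = ‖∏ i, A (σ i) i‖ := by
      rcases Int.units_eq_one_or (Equiv.Perm.sign σ) with h | h <;> simp [h]
    rw [this, norm_prod]
    exact Finset.prod_le_prod (fun _ _ => norm_nonneg _) fun i _ => h _ _
  · rw [Finset.card_univ, Fintype.card_perm, nsmul_eq_mul]

lemma Interlace.prod_pow_le {N : ℕ} {y : Fin N → ℕ} {x : Fin (N + 1) → ℕ} (h : Interlace y x)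
    {a : ℝ} (ha : 1 ≤ a) : ∏ k, a ^ y k ≤ ∏ j, a ^ x j := by
  rw [Fin.prod_univ_succ]
  refine (Finset.prod_le_prod (fun _ _ => by positivity) fun k _ =>
    pow_le_pow_right₀ ha (h k).2.le).trans (le_mul_of_one_le_left (by positivity) (one_le_pow₀ ha))

lemma Interlace.prod_pow_le_of_le_one {N : ℕ} {y : Fin N → ℕ} {x : Fin (N + 1) → ℕ}
    (h : Interlace y x) {r : ℝ} (h0 : 0 ≤ r) (h1 : r ≤ 1) : ∏ j, r ^ x j ≤ ∏ k, r ^ y k := by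
  rw [Fin.prod_univ_succ]
  refine (mul_le_of_le_one_left (by positivity) (pow_le_one₀ h0 h1)).trans
    (Finset.prod_le_prod (fun _ _ => by positivity) fun k _ =>
      pow_le_pow_of_le_one h0 h1 (h k).2.le)

lemma summable_prod_half_pow (n : ℕ) : Summable fun x : Fin n → ℕ => ∏ j, ((1 : ℝ) / 2) ^ x j := by
  have := (summable_norm_prod_and_hasSum_prod (n := n) (fun _ z => ((1 : ℂ) / 2) ^ z)
    fun _ => by simpa using summable_geometric_two).1
  simpa using this

lemma summable_ite_interlace {N : ℕ} (W : (Fin N → ℕ) × (Fin (N + 1) → ℕ) → ℂ) {C : ℝ} (hC : 0 ≤ C)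
    (h : ∀ y x, Interlace y x → ‖W (y, x)‖ ≤ C * ∏ j, ((1 : ℝ) / 4) ^ x j) :
    Summable fun p => ‖if Interlace p.1 p.2 then W p else 0‖ := by
  refine Summable.of_nonneg_of_le (fun _ => norm_nonneg _) (fun p => ?_)
    ((((summable_prod_half_pow N).mul_of_nonneg (summable_prod_half_pow (N + 1))
      (fun _ => by positivity) fun _ => by positivity)).mul_left C)
  obtain ⟨y, x⟩ := p
  by_cases hi : Interlace y x
  · simp only [hi, if_true]
    refine (h y x hi).trans (mul_le_mul_of_nonneg_left ?_ hC)
    have : ∏ j, ((1 : ℝ) / 4) ^ x j = (∏ j, ((1 : ℝ) / 2) ^ x j) * ∏ j, ((1 : ℝ) / 2) ^ x j := by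
      rw [← Finset.prod_mul_distrib]
      refine Finset.prod_congr rfl fun j _ => ?_
      rw [← mul_pow]
      norm_num
    rw [this]
    exact mul_le_mul_of_nonneg_right
      (hi.prod_pow_le_of_le_one (by norm_num) (by norm_num)) (by positivity)
  · simp only [hi, if_false, norm_zero]
    positivity

/-- The finite set of configurations interlacing with `x`. -/
def interlaceFinset {N : ℕ} (x : Fin (N + 1) → ℕ) : Finset (Fin N → ℕ) :=
  Fintype.piFinset fun i => Finset.Ico (x i.castSucc) (x i.succ)

lemma mem_interlaceFinset {N : ℕ} {x : Fin (N + 1) → ℕ} {y : Fin N → ℕ} :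
    y ∈ interlaceFinset x ↔ Interlace y x := by
  simp [interlaceFinset, Interlace]

lemma hfun_succ (lam : ℕ → ℝ) {N : ℕ} (x : Fin (N + 1) → ℕ) :
    hfun lam (N + 1) x = ∑ y ∈ interlaceFinset x, (∏ i, (lam (y i))⁻¹) * hfun lam N y := by
  rw [hfun, ← Finset.tsum_subtype' (interlaceFinset x)
    fun y => (∏ i, (lam (y i))⁻¹) * hfun lam N y]
  have : {y | Interlace y x} = (interlaceFinset x : Set (Fin N → ℕ)) := by
    ext y
    simp [mem_interlaceFinset]
  exact congrArg (fun S : Set (Fin N → ℕ) =>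
    ∑' y : S, (∏ i, (lam (y.1 i))⁻¹) * hfun lam N y.1) this

lemma hfun_eq_zero (lam : ℕ → ℝ) {N : ℕ} {x : Fin N → ℕ} (hx : ¬ StrictMono x) :
    hfun lam N x = 0 := by
  cases N with
  | zero => exact absurd (Subsingleton.strictMono x) hx
  | succ n =>
    rw [hfun_succ]
    refine Finset.sum_eq_zero fun y hy => absurd ?_ hx
    exact (mem_interlaceFinset.1 hy).strictMono_right

lemma exists_abs_hfun_le {lam : ℕ → ℝ} {s : ℝ} (hs : 0 < s) (hlb : ∀ k, s ≤ lam k) (N : ℕ) :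
    ∃ C a : ℝ, 0 ≤ C ∧ 1 ≤ a ∧ ∀ x, |hfun lam N x| ≤ C * ∏ i, a ^ x i := by
  induction N with
  | zero => exact ⟨1, 1, by norm_num, le_rfl, fun x => by simp [hfun]⟩
  | succ n ih =>
    obtain ⟨C, a, hC, ha, h⟩ := ih
    refine ⟨s⁻¹ ^ n * C, 2 * a, by positivity, by linarith, fun x => ?_⟩
    rw [hfun_succ]
    have hterm : ∀ y ∈ interlaceFinset x, |(∏ i, (lam (y i))⁻¹) * hfun lam n y| ≤
        s⁻¹ ^ n * C * ∏ j, a ^ x j := by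
      intro y hy
      rw [abs_mul, mul_assoc]
      refine mul_le_mul ?_ ((h y).trans (mul_le_mul_of_nonneg_left
        ((mem_interlaceFinset.1 hy).prod_pow_le ha) hC)) (abs_nonneg _) (by positivity)
      rw [Finset.abs_prod]
      refine (Finset.prod_le_prod (fun _ _ => abs_nonneg _) (g := fun _ => s⁻¹) fun i _ => ?_).trans
        (by simp)
      rw [abs_inv, abs_of_pos (hs.trans_le (hlb _))]
      exact inv_anti₀ hs (hlb _)
    have hcard : ((interlaceFinset x).card : ℝ) ≤ ∏ j, (2 : ℝ) ^ x j := by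
      rw [interlaceFinset, Fintype.card_piFinset, Fin.prod_univ_succ]
      push_cast
      refine (Finset.prod_le_prod (fun _ _ => by positivity) fun k _ => ?_).trans
        (le_mul_of_one_le_left (by positivity) (one_le_pow₀ one_le_two))
      rw [Nat.card_Ico]
      have := (Nat.lt_two_pow_self (n := x k.succ)).le
      exact_mod_cast (Nat.sub_le _ _).trans this
    refine (Finset.abs_sum_le_sum_abs _ _).trans
      ((Finset.sum_le_card_nsmul _ _ _ hterm).trans ?_)
    rw [nsmul_eq_mul]
    refine (mul_le_mul_of_nonneg_right hcard (by positivity)).trans (le_of_eq ?_)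
    simp_rw [mul_pow, Finset.prod_mul_distrib]
    ring

lemma exists_uniform_bound {P : ℕ → ℕ → ℂ}
    (hdecay : ∀ ρ : ℝ, 0 < ρ → ∀ x, ∃ C : ℝ, 0 ≤ C ∧ ∀ z, ‖P x z‖ ≤ C * ρ ^ z)
    {ρ : ℝ} (hρ : 0 < ρ) {ι : Type*} [Fintype ι] (x : ι → ℕ) :
    ∃ C : ℝ, 0 ≤ C ∧ ∀ i z, ‖P (x i) z‖ ≤ C * ρ ^ z := by
  choose C hC h using fun i => hdecay ρ hρ (x i)
  refine ⟨∑ i, C i, Finset.sum_nonneg fun i _ => hC i, fun i z => (h i z).trans ?_⟩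
  gcongr
  exact Finset.single_le_sum (fun i _ => hC i) (Finset.mem_univ i)

lemma summable_norm_of_decay {P : ℕ → ℕ → ℂ}
    (hdecay : ∀ ρ : ℝ, 0 < ρ → ∀ x, ∃ C : ℝ, 0 ≤ C ∧ ∀ z, ‖P x z‖ ≤ C * ρ ^ z) (x : ℕ) :
    Summable fun z => ‖P x z‖ := by
  obtain ⟨C, _, h⟩ := hdecay (1 / 2) (by norm_num) x
  exact Summable.of_nonneg_of_le (fun _ => norm_nonneg _) h (summable_geometric_two.mul_left C)

lemma cum_sub_cum_eq_sum {lam : ℕ → ℝ} (h0 : ∀ k, 0 < lam k) {P : ℕ → ℕ → ℂ}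
    (hrel : ∀ x z, (lam x : ℂ) * ((∑ u ∈ Finset.range (z + 1), P x u) -
      ∑ u ∈ Finset.range (z + 1), P (x + 1) u) = (lam z : ℂ) * P x z) {m n : ℕ} (hmn : m ≤ n)
    (z : ℕ) : (∑ u ∈ Finset.range (z + 1), P m u) - ∑ u ∈ Finset.range (z + 1), P n u =
      ∑ y ∈ Finset.Ico m n, (lam y : ℂ)⁻¹ * ((lam z : ℂ) * P y z) := by
  rw [← neg_sub, ← Finset.sum_Ico_sub (fun n => ∑ u ∈ Finset.range (z + 1), P n u) hmn,
    ← Finset.sum_neg_distrib]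
  refine Finset.sum_congr rfl fun y _ => ?_
  have : (lam y : ℂ) ≠ 0 := by exact_mod_cast (h0 y).ne'
  rw [← hrel, inv_mul_cancel_left₀ this, neg_sub]

/-- Summing the one-level determinant over the configurations `x'` interlacing with `y'`. -/
lemma hasSum_det_interlace {lam : ℕ → ℝ} (h0 : ∀ k, 0 < lam k) {P : ℕ → ℕ → ℂ}
    (hdecay : ∀ ρ : ℝ, 0 < ρ → ∀ x, ∃ C : ℝ, 0 ≤ C ∧ ∀ z, ‖P x z‖ ≤ C * ρ ^ z)
    (hsum : ∀ x, HasSum (P x) 1)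
    (hrel : ∀ x z, (lam x : ℂ) * ((∑ u ∈ Finset.range (z + 1), P x u) -
      ∑ u ∈ Finset.range (z + 1), P (x + 1) u) = (lam z : ℂ) * P x z)
    {N : ℕ} {x : Fin (N + 1) → ℕ} (hx : StrictMono x) {y' : Fin N → ℕ} (hy' : StrictMono y') :
    HasSum (fun x' : Fin (N + 1) → ℕ => if Interlace y' x' then
        (Matrix.of fun i j => P (x i) (x' j)).det else 0)
      ((∏ j, (lam (y' j) : ℂ)) * ∑ u ∈ interlaceFinset x, (∏ i, (lam (u i) : ℂ)⁻¹) *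
        (Matrix.of fun i j => P (u i) (y' j)).det) := by
  have hz : ∀ A : Matrix (Fin (N + 1)) (Fin (N + 1)) ℂ, (Matrix.fromBlocks A
      (0 : Matrix (Fin (N + 1)) (Fin 0) ℂ) (Matrix.of fun k _ => k.elim0)
      (0 : Matrix (Fin 0) (Fin 0) ℂ)).det = A.det := fun A => by
    rw [Matrix.det_fromBlocks_zero₁₂]
    simp
  have h := hasSum_det_fromBlocks (κ := Fin 0) (fun i => P (x i)) (fun k => k.elim0) 0 0
    (interlaceCell y') (fun i => summable_norm_of_decay hdecay _) (fun k => k.elim0)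
    (Interlace y') (interlace_iff_mem_cell y')
  have hc : (Matrix.of fun (k : Fin 0) (j : Fin (N + 1)) =>
      ∑' z, (interlaceCell y' j).indicator (k.elim0 : ℕ → ℂ) z) =
      Matrix.of fun k _ => k.elim0 := by
    ext k
    exact k.elim0
  have hc' : ∀ x' : Fin (N + 1) → ℕ, (Matrix.of fun (k : Fin 0) (j : Fin (N + 1)) =>
      (k.elim0 : ℕ → ℂ) (x' j)) = Matrix.of fun k _ => k.elim0 := by
    intro x'
    ext k
    exact k.elim0
  simp only [hc, hc', hz] at h
  convert h using 1
  simp_rw [tsum_indicator_interlaceCell hy' (hsum _)]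
  rw [det_snoc_one_sub_cons fun i k => ∑ z ∈ Finset.range (y' k + 1), P (x i) z]
  simp_rw [cum_sub_cum_eq_sum h0 hrel (hx (Fin.castSucc_lt_succ)).le]
  have hrow := (Matrix.detRowAlternating (n := Fin N) (R := ℂ)).toMultilinearMap.map_sum_finset
    (fun (i : Fin N) y k => (lam y : ℂ)⁻¹ * ((lam (y' k) : ℂ) * P y (y' k)))
    (fun i => Finset.Ico (x i.castSucc) (x i.succ))
  have e1 : (Matrix.of fun i k : Fin N => ∑ y ∈ Finset.Ico (x i.castSucc) (x i.succ),
      (lam y : ℂ)⁻¹ * ((lam (y' k) : ℂ) * P y (y' k))) = fun i : Fin N =>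
      ∑ y ∈ Finset.Ico (x i.castSucc) (x i.succ), fun k : Fin N =>
        (lam y : ℂ)⁻¹ * ((lam (y' k) : ℂ) * P y (y' k)) := by
    ext i k
    simp
  rw [e1]
  refine Eq.trans ?_ hrow.symm
  rw [Finset.mul_sum]
  refine Finset.sum_congr rfl fun u _ => ?_
  change _ = (Matrix.of fun i k : Fin N =>
    (lam (u i) : ℂ)⁻¹ * ((lam (y' k) : ℂ) * P (u i) (y' k))).det
  rw [mul_left_comm]
  have h1 := Matrix.det_mul_row (fun k => (lam (y' k) : ℂ)) (Matrix.of fun i k => P (u i) (y' k))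
  have h2 := Matrix.det_mul_column (fun i => (lam (u i) : ℂ)⁻¹)
    (Matrix.of fun i k => (lam (y' k) : ℂ) * P (u i) (y' k))
  simp only [Matrix.of_apply] at h1 h2
  rw [h2, h1]

/-- One-level harmonicity of `𝔥_N` for the Karlin–McGregor determinant. -/
theorem hasSum_det_mul_hfun {lam : ℕ → ℝ} {s : ℝ} (hs : 0 < s) (hlb : ∀ k, s ≤ lam k)
    {P : ℕ → ℕ → ℂ}
    (hdecay : ∀ ρ : ℝ, 0 < ρ → ∀ x, ∃ C : ℝ, 0 ≤ C ∧ ∀ z, ‖P x z‖ ≤ C * ρ ^ z)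
    (hsum : ∀ x, HasSum (P x) 1)
    (hrel : ∀ x z, (lam x : ℂ) * ((∑ u ∈ Finset.range (z + 1), P x u) -
      ∑ u ∈ Finset.range (z + 1), P (x + 1) u) = (lam z : ℂ) * P x z)
    (N : ℕ) {y : Fin N → ℕ} (hy : StrictMono y) :
    HasSum (fun y' : Fin N → ℕ => (Matrix.of fun i j => P (y i) (y' j)).det * (hfun lam N y' : ℂ))
      (hfun lam N y : ℂ) := by
  have h0 : ∀ k, 0 < lam k := fun k => hs.trans_le (hlb k)
  induction N with
  | zero =>
    simp [hfun]
  | succ N ih =>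
    set W : (Fin N → ℕ) × (Fin (N + 1) → ℕ) → ℂ := fun p =>
      (Matrix.of fun i j => P (y i) (p.2 j)).det *
        ((∏ i, (lam (p.1 i) : ℂ)⁻¹) * (hfun lam N p.1 : ℂ)) with hW
    obtain ⟨C, a, hC, ha, hh⟩ := exists_abs_hfun_le hs hlb N
    have ha0 : 0 < a := by linarith
    obtain ⟨K, hK, hKb⟩ := exists_uniform_bound hdecay (by positivity : 0 < 1 / (4 * a)) y
    have hsm : Summable fun p => if Interlace p.1 p.2 then W p else 0 := by
      refine (summable_ite_interlace W
        (C := ((N + 1).factorial * K ^ (N + 1)) * (s⁻¹ ^ N * C)) (by positivity)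
        fun y' x' hi => ?_).of_norm
      have h1 := norm_det_le_of_column (Matrix.of fun i j => P (y i) (x' j))
        (fun j => K * (1 / (4 * a)) ^ x' j) fun i j => hKb i _
      rw [Fintype.card_fin, Finset.prod_mul_distrib, Finset.prod_const, Finset.card_univ,
        Fintype.card_fin] at h1
      have h2 : ‖∏ i, (lam (y' i) : ℂ)⁻¹‖ ≤ s⁻¹ ^ N := by
        rw [norm_prod]
        refine (Finset.prod_le_prod (fun _ _ => norm_nonneg _) (g := fun _ => s⁻¹)
          fun i _ => ?_).trans (by simp)
        rw [norm_inv, Complex.norm_real, Real.norm_eq_abs, abs_of_pos (h0 _)]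
        exact inv_anti₀ hs (hlb _)
      have h3 : ‖(hfun lam N y' : ℂ)‖ ≤ C * ∏ j, a ^ x' j := by
        rw [Complex.norm_real, Real.norm_eq_abs]
        exact (hh y').trans (mul_le_mul_of_nonneg_left (hi.prod_pow_le ha) hC)
      rw [hW]
      simp only [norm_mul]
      refine (mul_le_mul h1 (mul_le_mul h2 h3 (norm_nonneg _) (by positivity))
        (by positivity) (by positivity)).trans (le_of_eq ?_)
      have : ∏ j, ((1 : ℝ) / 4) ^ x' j = (∏ j, (1 / (4 * a)) ^ x' j) * ∏ j, a ^ x' j := by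
        rw [← Finset.prod_mul_distrib]
        refine Finset.prod_congr rfl fun j _ => ?_
        rw [← mul_pow]
        congr 1
        field_simp
      rw [this]
      ring
    have hfib : ∀ y' : Fin N → ℕ, HasSum
        (fun x' => if Interlace y' x' then W (y', x') else 0)
        (∑ u ∈ interlaceFinset y, (∏ i, (lam (u i) : ℂ)⁻¹) *
          ((Matrix.of fun i j => P (u i) (y' j)).det * (hfun lam N y' : ℂ))) := by
      intro y'
      by_cases hy' : StrictMono y'
      · have h := (hasSum_det_interlace h0 hdecay hsum hrel hy hy').mul_right
          ((∏ i, (lam (y' i) : ℂ)⁻¹) * (hfun lam N y' : ℂ))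
        simp only [ite_mul, zero_mul] at h
        refine Eq.subst (motive := fun v => HasSum _ v) ?_ h
        have : (∏ j, (lam (y' j) : ℂ)) * ∏ i, (lam (y' i) : ℂ)⁻¹ = 1 := by
          rw [← Finset.prod_mul_distrib]
          refine Finset.prod_eq_one fun j _ => mul_inv_cancel₀ ?_
          exact_mod_cast (h0 _).ne'
        rw [mul_mul_mul_comm, this, one_mul, Finset.sum_mul]
        exact Finset.sum_congr rfl fun u _ => mul_assoc _ _ _
      · have : (hfun lam N y' : ℂ) = 0 := by rw [hfun_eq_zero lam hy', Complex.ofReal_zero]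
        simp [hW, this]
    have htot := hsm.hasSum.prod_fiberwise hfib
    have htot' : HasSum (fun y' : Fin N → ℕ => ∑ u ∈ interlaceFinset y,
        (∏ i, (lam (u i) : ℂ)⁻¹) * ((Matrix.of fun i j => P (u i) (y' j)).det *
          (hfun lam N y' : ℂ))) (hfun lam (N + 1) y : ℂ) := by
      rw [hfun_succ]
      push_cast
      exact hasSum_sum fun u hu =>
        (ih (mem_interlaceFinset.1 hu).strictMono_left).mul_left _
    have hall := hsm.hasSum
    rw [htot.unique htot', ← (Equiv.prodComm _ _).hasSum_iff] at hall
    refine hall.prod_fiberwise fun x' => ?_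
    have hfin : ∀ y' ∉ interlaceFinset x', (if Interlace y' x' then W (y', x') else 0) = 0 :=
      fun y' hy' => if_neg (mt mem_interlaceFinset.2 hy')
    have h := hasSum_sum_of_ne_finset_zero (L := .unconditional _) hfin
    refine HasSum.congr_fun (g := fun y' => if Interlace y' x' then W (y', x') else 0)
      ?_ fun y' => rfl
    convert h using 1
    rw [hfun_succ]
    push_cast
    rw [Finset.mul_sum]
    exact Finset.sum_congr rfl fun u hu => by rw [if_pos (mem_interlaceFinset.1 hu)]

/-- Summing the two-level kernel over the configurations `x'` interlacing with `y'`. -/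
lemma hasSum_Ut_interlace {lam : ℕ → ℝ} {s M R : ℝ} (hs : 0 < s) (hlb : ∀ k, s ≤ lam k)
    (hub : ∀ k, lam k ≤ M) (hR : M < R) (t : ℝ) {N : ℕ} (y : Fin N → ℕ) (x : Fin (N + 1) → ℕ)
    {y' : Fin N → ℕ} (hy' : StrictMono y') :
    HasSum (fun x' => if Interlace y' x' then Ut lam R t N y x y' x' else 0)
      (Matrix.of fun i j => eL lam R t (y i) (y' j)).det := by
  have h0 : ∀ k, 0 < lam k := fun k => hs.trans_le (hlb k)
  have hP := fun x => hasSum_eL hs hlb hub hR t x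
  have hPn := fun x => summable_norm_eL hs hlb hub hR t x
  have hcn : ∀ k : Fin N, Summable fun z =>
      ‖(lam (y k) : ℂ) * (eL lam R t (y k) z - eL lam R t (y k + 1) z)‖ := fun k =>
    Summable.of_nonneg_of_le (fun _ => norm_nonneg _) (fun z => by
      rw [norm_mul]
      exact mul_le_mul_of_nonneg_left (norm_sub_le _ _) (norm_nonneg _))
      (((hPn (y k)).add (hPn (y k + 1))).mul_left ‖(lam (y k) : ℂ)‖)
  have hcs : ∀ k : Fin N, HasSum (fun z =>
      (lam (y k) : ℂ) * (eL lam R t (y k) z - eL lam R t (y k + 1) z)) 0 := fun k => by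
    simpa using ((hP (y k)).sub (hP (y k + 1))).mul_left (lam (y k) : ℂ)
  have h := hasSum_det_fromBlocks (fun i => eL lam R t (x i))
    (fun k z => (lam (y k) : ℂ) * (eL lam R t (y k) z - eL lam R t (y k + 1) z))
    (Matrix.of fun (i : Fin (N + 1)) (j : Fin N) => (1 / (lam (y' j) : ℂ)) *
      ((∑ z ∈ Finset.range (y' j + 1), eL lam R t (x i) z) - if (i : ℕ) ≤ (j : ℕ) then 1 else 0))
    (Matrix.of fun i j => eL lam R t (y i) (y' j)) (interlaceCell y') (fun i => hPn _) hcn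
    (Interlace y') (interlace_iff_mem_cell y')
  refine Eq.subst (motive := fun v => HasSum _ v) ?_ h
  have hcum : ∀ i k : Fin N, ∑ z ∈ Finset.range (y' k + 1),
      (lam (y i) : ℂ) * (eL lam R t (y i) z - eL lam R t (y i + 1) z) =
      (lam (y' k) : ℂ) * eL lam R t (y i) (y' k) := by
    intro i k
    rw [← Finset.mul_sum, Finset.sum_sub_distrib]
    exact mul_eLCum_sub_eLCum_succ h0 hub hR t _ _
  simp_rw [tsum_indicator_interlaceCell hy' (hP _), tsum_indicator_interlaceCell hy' (hcs _), hcum]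
  exact det_fromBlocks_snoc_sub_cons
    (fun i k => ∑ z ∈ Finset.range (y' k + 1), eL lam R t (x i) z)
    (Matrix.of fun i j => eL lam R t (y i) (y' j)) (fun k => (lam (y' k) : ℂ))
    fun k => by exact_mod_cast (h0 _).ne'

lemma exists_norm_Ut_le {lam : ℕ → ℝ} {s M R : ℝ} (hs : 0 < s) (hlb : ∀ k, s ≤ lam k)
    (hub : ∀ k, lam k ≤ M) (hR : M < R) (t : ℝ) {N : ℕ} (y : Fin N → ℕ) (x : Fin (N + 1) → ℕ)
    {ρ : ℝ} (hρ : 0 < ρ) (hρ1 : ρ ≤ 1) :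
    ∃ C : ℝ, 0 ≤ C ∧ ∀ y' x', ‖Ut lam R t N y x y' x'‖ ≤ C * ∏ j, ρ ^ x' j := by
  have h0 : ∀ k, 0 < lam k := fun k => hs.trans_le (hlb k)
  have hM : 0 < M := (h0 0).trans_le (hub 0)
  have hdecay : ∀ ρ : ℝ, 0 < ρ → ∀ x, ∃ C : ℝ, 0 ≤ C ∧ ∀ z, ‖eL lam R t x z‖ ≤ C * ρ ^ z :=
    fun ρ hρ x => exists_norm_eL_le hs hlb hub hR t hρ x
  obtain ⟨K₁, hK₁, h₁⟩ := exists_uniform_bound hdecay hρ x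
  obtain ⟨K₂, hK₂, h₂⟩ := exists_uniform_bound hdecay hρ y
  obtain ⟨K₃, hK₃, h₃⟩ := exists_uniform_bound hdecay hρ fun i => y i + 1
  have hPn := fun x => summable_norm_eL hs hlb hub hR t x
  set K := K₁ + M * (K₂ + K₃) with hK
  set T := ∑ i, ∑' z, ‖eL lam R t (x i) z‖ with hT
  have hT0 : 0 ≤ T := Finset.sum_nonneg fun i _ => tsum_nonneg fun _ => norm_nonneg _
  set L := s⁻¹ * (T + 1) + K₂ with hL
  have hK0 : 0 ≤ K := by positivity
  refine ⟨(Fintype.card (Fin (N + 1) ⊕ Fin N)).factorial * (K ^ (N + 1) * L ^ N), by positivity,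
    fun y' x' => ?_⟩
  refine (norm_det_le_of_column _ (Sum.elim (fun j => K * ρ ^ x' j) fun _ => L) ?_).trans
    (le_of_eq ?_)
  · rintro (i | i) (j | j)
    · simp only [Matrix.fromBlocks_apply₁₁, Matrix.of_apply, Sum.elim_inl]
      refine (h₁ i _).trans (mul_le_mul_of_nonneg_right ?_ (by positivity))
      rw [hK]
      exact le_add_of_nonneg_right (by positivity)
    · simp only [Matrix.fromBlocks_apply₁₂, Matrix.of_apply, Sum.elim_inr]
      refine le_trans ?_ (le_add_of_nonneg_right hK₂)
      rw [norm_mul, one_div, norm_inv, Complex.norm_real, Real.norm_eq_abs, abs_of_pos (h0 _)]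
      refine mul_le_mul (inv_anti₀ hs (hlb _)) ?_ (norm_nonneg _) (by positivity)
      refine (norm_sub_le _ _).trans (add_le_add ?_ ?_)
      · refine (norm_sum_le _ _).trans (((hPn (x i)).sum_le_tsum _
          fun _ _ => norm_nonneg _).trans ?_)
        exact Finset.single_le_sum (f := fun i => ∑' z, ‖eL lam R t (x i) z‖)
          (fun i _ => tsum_nonneg fun _ => norm_nonneg _) (Finset.mem_univ i)
      · split_ifs <;> simp
    · simp only [Matrix.fromBlocks_apply₂₁, Matrix.of_apply, Sum.elim_inl]
      rw [norm_mul, Complex.norm_real, Real.norm_eq_abs, abs_of_pos (h0 _)]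
      calc _ ≤ M * (K₂ * ρ ^ x' j + K₃ * ρ ^ x' j) :=
            mul_le_mul (hub _) ((norm_sub_le _ _).trans (add_le_add (h₂ i _) (h₃ i _)))
              (norm_nonneg _) hM.le
        _ = (M * (K₂ + K₃)) * ρ ^ x' j := by ring
        _ ≤ K * ρ ^ x' j := mul_le_mul_of_nonneg_right
            (le_add_of_nonneg_left hK₁) (by positivity)
    · simp only [Matrix.fromBlocks_apply₂₂, Matrix.of_apply, Sum.elim_inr]
      refine ((h₂ i _).trans (mul_le_of_le_one_right hK₂ (pow_le_one₀ hρ.le hρ1))).trans ?_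
      exact le_add_of_nonneg_left (by positivity)
  · rw [Fintype.prod_sum_type]
    simp only [Sum.elim_inl, Sum.elim_inr, Finset.prod_mul_distrib, Finset.prod_const,
      Finset.card_univ, Fintype.card_fin]
    ring

/-- the function (y,x) ↦ 𝔥_N(y) on W^{N,N+1} is harmonic for the
two-level kernel: Σ_{(y',x') ∈ W^{N,N+1}} U_t^{N,N+1}[(y,x),(y',x')] 𝔥_N(y') = 𝔥_N(y),
the series converging absolutely. -/
theorem stmt_10 (lam : ℕ → ℝ) (s M : ℝ) (hs : 0 < s)
    (hlb : ∀ x, s ≤ lam x) (hub : ∀ x, lam x ≤ M)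
    (R : ℝ) (hR : M < R) (N : ℕ) (hN : 1 ≤ N) (t : ℝ) (ht : 0 ≤ t)
    (y : Fin N → ℕ) (x : Fin (N + 1) → ℕ) (hyx : Interlace y x) :
    HasSum (fun p : { p : (Fin N → ℕ) × (Fin (N + 1) → ℕ) // Interlace p.1 p.2 } =>
        Ut lam R t N y x p.1.1 p.1.2 * (hfun lam N p.1.1 : ℂ))
      ((hfun lam N y : ℂ)) ∧
    Summable (fun p : { p : (Fin N → ℕ) × (Fin (N + 1) → ℕ) // Interlace p.1 p.2 } =>
        ‖Ut lam R t N y x p.1.1 p.1.2 * (hfun lam N p.1.1 : ℂ)‖) := by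
  set W : (Fin N → ℕ) × (Fin (N + 1) → ℕ) → ℂ := fun p =>
    Ut lam R t N y x p.1 p.2 * (hfun lam N p.1 : ℂ) with hW
  have h0 : ∀ k, 0 < lam k := fun k => hs.trans_le (hlb k)
  obtain ⟨C, a, hC, ha, hh⟩ := exists_abs_hfun_le hs hlb N
  have ha0 : 0 < a := by linarith
  obtain ⟨K, hK, hKb⟩ := exists_norm_Ut_le hs hlb hub hR t y x
    (by positivity : 0 < 1 / (4 * a)) (by rw [div_le_one (by positivity)]; linarith)
  have hsm : Summable fun p => ‖if Interlace p.1 p.2 then W p else 0‖ := by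
    refine summable_ite_interlace W (C := K * C) (by positivity) fun y' x' hi => ?_
    have h3 : ‖(hfun lam N y' : ℂ)‖ ≤ C * ∏ j, a ^ x' j := by
      rw [Complex.norm_real, Real.norm_eq_abs]
      exact (hh y').trans (mul_le_mul_of_nonneg_left (hi.prod_pow_le ha) hC)
    rw [hW, norm_mul]
    refine (mul_le_mul (hKb y' x') h3 (norm_nonneg _) (by positivity)).trans (le_of_eq ?_)
    have : ∏ j, ((1 : ℝ) / 4) ^ x' j = (∏ j, (1 / (4 * a)) ^ x' j) * ∏ j, a ^ x' j := by
      rw [← Finset.prod_mul_distrib]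
      refine Finset.prod_congr rfl fun j _ => ?_
      rw [← mul_pow]
      congr 1
      field_simp
    rw [this]
    ring
  have hfib : ∀ y' : Fin N → ℕ, HasSum (fun x' => if Interlace y' x' then W (y', x') else 0)
      ((Matrix.of fun i j => eL lam R t (y i) (y' j)).det * (hfun lam N y' : ℂ)) := by
    intro y'
    by_cases hy' : StrictMono y'
    · simpa only [ite_mul, zero_mul] using
        (hasSum_Ut_interlace hs hlb hub hR t y x hy').mul_right (hfun lam N y' : ℂ)
    · have : (hfun lam N y' : ℂ) = 0 := by rw [hfun_eq_zero lam hy', Complex.ofReal_zero]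
      simp [hW, this]
  have hone := hasSum_det_mul_hfun hs hlb
    (fun ρ hρ x => exists_norm_eL_le hs hlb hub hR t hρ x) (hasSum_eL hs hlb hub hR t)
    (mul_eLCum_sub_eLCum_succ h0 hub hR t) N hyx.strictMono_left
  have hall := hsm.of_norm.hasSum
  rw [(hall.prod_fiberwise hfib).unique hone] at hall
  have hind : (fun p : (Fin N → ℕ) × (Fin (N + 1) → ℕ) => if Interlace p.1 p.2 then W p else 0) =
      {p | Interlace p.1 p.2}.indicator W := by
    ext p
    simp [Set.indicator_apply]
  rw [hind] at hall
  simp_rw [congrFun hind, norm_indicator_eq_indicator_norm] at hsm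
  exact ⟨hasSum_subtype_iff_indicator.2 hall, summable_subtype_iff_indicator.2 hsm⟩
end

section
/- Let λ : ℤ₊ → ℝ satisfy (UB) and fix t ≥ 0. Define for x ∈ ℤ₊ and integers i, j ≥ 0: Ψ_i(x) = −(1/λ(x)) · (1/(2πi)) ∮_{C_λ} ψ_x(w) w^i e^{−tw} dw and Φ_j(x) = (1/(2πi)) ∮_{C_0} p_x(u) e^{tu} u^{−(j+1)} du, where C_λ is the counterclockwise circle |w| = R for a fixed R > M and C_0 is the counterclockwise circle |u| = r for a fixed 0 < r < s. Then the two families are biorthogonal: for all i, j ≥ 0, Σ_{x ∈ ℤ₊} Ψ_i(x) Φ_j(x) = 1(i = j), the series converging absolutely. -/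
open Complex MeasureTheory Finset
open scoped Real ComplexOrder

/-- Termwise integration over a circle of a series dominated by a summable sequence of constants. -/
theorem hasSum_circleIntegral_of_norm_le {f : ℕ → ℂ → ℂ} {g : ℂ → ℂ} {c : ℂ} {R : ℝ} {b : ℕ → ℝ}
    (hR : 0 ≤ R) (hf : ∀ n, ContinuousOn (f n) (Metric.sphere c R)) (hb : Summable b)
    (hfb : ∀ n, ∀ z ∈ Metric.sphere c R, ‖f n z‖ ≤ b n)
    (hg : ∀ z ∈ Metric.sphere c R, HasSum (fun n => f n z) (g z)) :
    HasSum (fun n => ∮ z in C(c, R), f n z) (∮ z in C(c, R), g z) := by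
  unfold circleIntegral
  refine intervalIntegral.hasSum_integral_of_dominated_convergence (fun n _ => R * b n)
    (fun n => ?_) (fun n => ?_) ?_ ?_ ?_
  · refine Continuous.aestronglyMeasurable ?_
    have h : Continuous fun θ => f n (circleMap c R θ) :=
      (hf n).comp_continuous (continuous_circleMap c R) fun θ => circleMap_mem_sphere c hR θ
    simp only [deriv_circleMap]
    exact ((continuous_circleMap 0 R).mul continuous_const).smul h
  · refine Filter.Eventually.of_forall fun θ _ => ?_
    rw [norm_smul, deriv_circleMap, norm_mul, norm_circleMap_zero, norm_I, mul_one,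
      abs_of_nonneg hR]
    exact mul_le_mul_of_nonneg_left (hfb n _ (circleMap_mem_sphere c hR θ)) hR
  · exact Filter.Eventually.of_forall fun θ _ => hb.mul_left R
  · exact intervalIntegrable_const
  · exact Filter.Eventually.of_forall fun θ _ =>
      (hg _ (circleMap_mem_sphere c hR θ)).const_smul _

theorem ofReal_sub_ne_zero_of_lt_norm {a : ℝ} {w : ℂ} (ha : 0 < a) (hw : a < ‖w‖) :
    (a : ℂ) - w ≠ 0 := by
  intro h
  rw [← sub_eq_zero.mp h, norm_real, Real.norm_of_nonneg ha.le] at hw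
  exact hw.false

theorem differentiableAt_psiF {lam : ℕ → ℝ} {x : ℕ} {w : ℂ}
    (h : ∀ k, (lam k : ℂ) - w ≠ 0) : DifferentiableAt ℂ (psiF lam x) w := by
  unfold psiF
  refine DifferentiableAt.fun_finsetProd fun k _ => ?_
  exact (differentiableAt_const _).div ((differentiableAt_const _).sub differentiableAt_id) (h k)

theorem continuous_pF (lam : ℕ → ℝ) (x : ℕ) : Continuous (pF lam x) := by
  unfold pF
  fun_prop

theorem neg_inv_mul_psiF_mul_pF {lam : ℕ → ℝ} (h0 : ∀ k, lam k ≠ 0) (x : ℕ) (w u : ℂ) :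
    -(1 / (lam x : ℂ)) * psiF lam x w * pF lam x u =
      -(((lam x : ℂ) - w)⁻¹ * ∏ k ∈ range x, ((lam k : ℂ) - u) / ((lam k : ℂ) - w)) := by
  have hx : (lam x : ℂ) ≠ 0 := mod_cast h0 x
  have hprod : (∏ k ∈ range x, (lam k : ℂ) / ((lam k : ℂ) - w)) * pF lam x u =
      ∏ k ∈ range x, ((lam k : ℂ) - u) / ((lam k : ℂ) - w) := by
    unfold pF
    rw [← prod_mul_distrib]
    refine prod_congr rfl fun k _ => ?_
    have hk : (lam k : ℂ) ≠ 0 := mod_cast h0 k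
    field_simp
  rw [← hprod, psiF, prod_range_succ]
  field_simp

/-- The telescoping sum behind the biorthogonality. -/
theorem sum_range_neg_inv_mul_prod {a : ℕ → ℂ} {w u : ℂ} (hw : ∀ k, a k - w ≠ 0) (huw : w ≠ u)
    (n : ℕ) :
    ∑ x ∈ range n, -((a x - w)⁻¹ * ∏ k ∈ range x, (a k - u) / (a k - w)) =
      (1 - ∏ k ∈ range n, (a k - u) / (a k - w)) / (w - u) := by
  have hwu : w - u ≠ 0 := sub_ne_zero.mpr huw
  induction n with
  | zero => simp
  | succ n ih =>
    have hn := hw n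
    rw [sum_range_succ, ih, prod_range_succ]
    field_simp
    ring

theorem le_norm_sub_of_norm_eq {a M R : ℝ} {w : ℂ} (ha : 0 < a) (haM : a ≤ M) (hw : ‖w‖ = R) :
    R - M ≤ ‖(a : ℂ) - w‖ := by
  have h := norm_sub_norm_le w (a : ℂ)
  rw [norm_real, Real.norm_of_nonneg ha.le, hw, norm_sub_rev] at h
  linarith

theorem norm_prod_div_le {lam : ℕ → ℝ} {M R r : ℝ} (hlam : ∀ k, 0 < lam k) (hub : ∀ k, lam k ≤ M)
    (hR : 2 * (M + r) ≤ R - M) (hMR : M < R) {w u : ℂ} (hw : ‖w‖ = R) (hu : ‖u‖ = r) (x : ℕ) :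
    ‖∏ k ∈ range x, ((lam k : ℂ) - u) / ((lam k : ℂ) - w)‖ ≤ (1 / 2) ^ x := by
  rw [norm_prod]
  refine (prod_le_prod (g := fun _ => (1 / 2 : ℝ)) (fun _ _ => norm_nonneg _)
    fun k _ => ?_).trans_eq (by simp)
  have h1 : ‖(lam k : ℂ) - u‖ ≤ M + r := by
    refine (norm_sub_le _ _).trans ?_
    rw [norm_real, Real.norm_of_nonneg (hlam k).le, hu]
    linarith [hub k]
  have h2 := le_norm_sub_of_norm_eq (hlam k) (hub k) hw
  rw [norm_div, div_le_iff₀ (by linarith)]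
  linarith

theorem norm_neg_inv_mul_psiF_mul_pF_le {lam : ℕ → ℝ} {M R r : ℝ} (hlam : ∀ k, 0 < lam k)
    (hub : ∀ k, lam k ≤ M) (hR : 2 * (M + r) ≤ R - M) (hMR : M < R) {w u : ℂ} (hw : ‖w‖ = R)
    (hu : ‖u‖ = r) (x : ℕ) :
    ‖-(1 / (lam x : ℂ)) * psiF lam x w * pF lam x u‖ ≤ (R - M)⁻¹ * (1 / 2) ^ x := by
  rw [neg_inv_mul_psiF_mul_pF fun k => (hlam k).ne', norm_neg, norm_mul, norm_inv]
  have := le_norm_sub_of_norm_eq (hlam x) (hub x) hw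
  have : 0 < R - M := by linarith
  gcongr
  exact norm_prod_div_le hlam hub hR hMR hw hu x

theorem hasSum_neg_inv_mul_psiF_mul_pF {lam : ℕ → ℝ} {M R r : ℝ} (hlam : ∀ k, 0 < lam k)
    (hub : ∀ k, lam k ≤ M) (hR : 2 * (M + r) ≤ R - M) (hMR : M < R) {w u : ℂ} (hw : ‖w‖ = R)
    (hu : ‖u‖ = r) (huw : w ≠ u) :
    HasSum (fun x => -(1 / (lam x : ℂ)) * psiF lam x w * pF lam x u) (w - u)⁻¹ := by
  have hne : ∀ k, (lam k : ℂ) - w ≠ 0 := fun k =>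
    ofReal_sub_ne_zero_of_lt_norm (hlam k) (by rw [hw]; exact (hub k).trans_lt hMR)
  have hgeom : Summable fun x : ℕ => (R - M)⁻¹ * (1 / 2 : ℝ) ^ x :=
    summable_geometric_two.mul_left _
  have hsum := hgeom.of_norm_bounded
    (norm_neg_inv_mul_psiF_mul_pF_le hlam hub hR hMR hw hu)
  rw [hsum.hasSum_iff_tendsto_nat]
  simp only [neg_inv_mul_psiF_mul_pF fun k => (hlam k).ne',
    sum_range_neg_inv_mul_prod hne huw]
  have h0 : Filter.Tendsto (fun x => ∏ k ∈ range x, ((lam k : ℂ) - u) / ((lam k : ℂ) - w))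
      Filter.atTop (nhds 0) :=
    squeeze_zero_norm (norm_prod_div_le hlam hub hR hMR hw hu)
      (tendsto_pow_atTop_nhds_zero_of_lt_one (by norm_num) (by norm_num))
  simpa using (h0.const_sub 1).div_const (w - u)

theorem circleIntegral_psiF_mul_eq {lam : ℕ → ℝ} {M R R' : ℝ} (hlam : ∀ k, 0 < lam k)
    (hub : ∀ k, lam k ≤ M) (hMR : M < R) (hRR' : R ≤ R') {f : ℂ → ℂ} (hf : Differentiable ℂ f)
    (x : ℕ) :
    (∮ w in C(0, R), psiF lam x w * f w) = ∮ w in C(0, R'), psiF lam x w * f w := by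
  have hR : 0 < R := ((hlam 0).trans_le (hub 0)).trans hMR
  have hd : ∀ w : ℂ, R ≤ ‖w‖ → DifferentiableAt ℂ (fun w => psiF lam x w * f w) w := fun w hw =>
    (differentiableAt_psiF fun k => ofReal_sub_ne_zero_of_lt_norm (hlam k)
      (((hub k).trans_lt hMR).trans_le hw)).mul (hf w)
  refine (circleIntegral_eq_of_differentiable_on_annulus_off_countable hR hRR'
    Set.countable_empty (fun w hw => ?_) fun w hw => ?_).symm
  · exact (hd w (by simpa using hw.2)).continuousAt.continuousWithinAt
  · exact hd w (le_of_lt (by simpa using hw.1.2))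

/-- Expansion of an entire function in the polynomials `pF lam x`, with a geometric bound. -/
theorem hasSum_circleIntegral_psiF_mul_pF {lam : ℕ → ℝ} {M R r : ℝ} (hlam : ∀ k, 0 < lam k)
    (hub : ∀ k, lam k ≤ M) (hr : 0 ≤ r) (hMR : M < R) {f : ℂ → ℂ} (hf : Differentiable ℂ f) :
    (∃ C : ℝ, ∀ (x : ℕ) (u : ℂ), ‖u‖ = r →
      ‖-(1 / (lam x : ℂ)) * ((2 * (Real.pi : ℂ) * I)⁻¹ *
        ∮ w in C(0, R), psiF lam x w * f w) * pF lam x u‖ ≤ C * (1 / 2) ^ x) ∧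
    ∀ u : ℂ, ‖u‖ = r →
      HasSum (fun x => -(1 / (lam x : ℂ)) * ((2 * (Real.pi : ℂ) * I)⁻¹ *
        ∮ w in C(0, R), psiF lam x w * f w) * pF lam x u) (f u) := by
  have hM : 0 < M := (hlam 0).trans_le (hub 0)
  set R' := 3 * M + 2 * r + R with hR'
  have hgap : 2 * (M + r) ≤ R' - M := by linarith
  have hMR' : M < R' := by linarith
  have hR'0 : 0 < R' := hM.trans hMR'
  obtain ⟨K, hK⟩ := (isCompact_sphere (0 : ℂ) R').exists_bound_of_continuousOn
    hf.continuous.continuousOn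
  have hterm : ∀ (x : ℕ) (u : ℂ), -(1 / (lam x : ℂ)) * ((2 * (Real.pi : ℂ) * I)⁻¹ *
      ∮ w in C(0, R), psiF lam x w * f w) * pF lam x u = (2 * (Real.pi : ℂ) * I)⁻¹ *
        ∮ w in C(0, R'), -(1 / (lam x : ℂ)) * psiF lam x w * pF lam x u * f w := by
    intro x u
    have : ∀ w, -(1 / (lam x : ℂ)) * psiF lam x w * pF lam x u * f w =
        (-(1 / (lam x : ℂ)) * pF lam x u) * (psiF lam x w * f w) := fun w => by ring
    simp only [this, circleIntegral.integral_const_mul]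
    rw [circleIntegral_psiF_mul_eq hlam hub hMR (show R ≤ R' by linarith) hf]
    ring
  have hbound : ∀ (x : ℕ) (u : ℂ), ‖u‖ = r → ∀ w ∈ Metric.sphere (0 : ℂ) R',
      ‖-(1 / (lam x : ℂ)) * psiF lam x w * pF lam x u * f w‖ ≤
        (R' - M)⁻¹ * (1 / 2) ^ x * K := by
    intro x u hu w hw
    rw [norm_mul]
    have : 0 < R' - M := by linarith
    exact mul_le_mul (norm_neg_inv_mul_psiF_mul_pF_le hlam hub hgap hMR' (by simpa using hw) hu x)
      (hK w hw) (norm_nonneg _) (by positivity)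
  refine ⟨⟨R' * ((R' - M)⁻¹ * K), fun x u hu => ?_⟩, fun u hu => ?_⟩
  · rw [hterm, ← smul_eq_mul]
    refine (circleIntegral.norm_two_pi_i_inv_smul_integral_le_of_norm_le_const hR'0.le
      (hbound x u hu)).trans_eq ?_
    ring
  · simp only [hterm]
    have hcauchy := hf.differentiableOn.circleIntegral_sub_inv_smul (c := 0) (R := R') (w := u)
      (by rw [mem_ball_zero_iff, hu]; linarith)
    have h : HasSum
        (fun x => ∮ w in C(0, R'), -(1 / (lam x : ℂ)) * psiF lam x w * pF lam x u * f w)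
        (∮ w in C(0, R'), (w - u)⁻¹ • f w) := by
      refine hasSum_circleIntegral_of_norm_le hR'0.le (fun x w hw => ?_)
        ((summable_geometric_two.mul_left _).mul_right K) (fun x => hbound x u hu) fun w hw => ?_
      · have hψ : DifferentiableAt ℂ (psiF lam x) w := differentiableAt_psiF fun k =>
          ofReal_sub_ne_zero_of_lt_norm (hlam k)
            (by rw [mem_sphere_zero_iff_norm.mp hw]; exact (hub k).trans_lt hMR')
        have hfw := (hf w).continuousAt
        have hψw := hψ.continuousAt
        exact ContinuousAt.continuousWithinAt (by fun_prop)
      · have hw' : ‖w‖ = R' := by simpa using hw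
        refine (hasSum_neg_inv_mul_psiF_mul_pF hlam hub hgap hMR' hw' hu ?_).mul_right (f w)
        rintro rfl
        linarith
    have hpi : (2 * (Real.pi : ℂ) * I) ≠ 0 := two_pi_I_ne_zero
    rw [hcauchy] at h
    have h' := h.mul_left (2 * (Real.pi : ℂ) * I)⁻¹
    rwa [smul_eq_mul, inv_mul_cancel_left₀ hpi] at h'

theorem two_pi_I_inv_mul_circleIntegral_zpow {r : ℝ} (hr : 0 < r) (n : ℤ) :
    (2 * (Real.pi : ℂ) * I)⁻¹ * (∮ u in C(0, r), u ^ n) = if n = -1 then 1 else 0 := by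
  split_ifs with h
  · subst h
    have h := circleIntegral.integral_sub_center_inv 0 hr.ne'
    simp only [sub_zero] at h
    simp only [zpow_neg_one]
    rw [h, inv_mul_cancel₀ two_pi_I_ne_zero]
  · have h := circleIntegral.integral_sub_zpow_of_ne h 0 0 r
    simp only [sub_zero] at h
    rw [h, mul_zero]

/-- biorthogonality. With
Ψ_i(x) = −(1/λ(x)) (1/2πi) ∮_{|w|=R} ψ_x(w) w^i e^{−tw} dw and
Φ_j(x) = (1/2πi) ∮_{|u|=r} p_x(u) e^{tu} u^{−(j+1)} du (R > M, 0 < r < s),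
one has Σ_{x≥0} Ψ_i(x) Φ_j(x) = 1(i=j), absolutely convergent. -/
theorem stmt_18 (lam : ℕ → ℝ) (s M : ℝ) (hs : 0 < s)
    (hlb : ∀ x, s ≤ lam x) (hub : ∀ x, lam x ≤ M)
    (t : ℝ) (ht : 0 ≤ t) (R r : ℝ) (hR : M < R) (hr0 : 0 < r) (hrs : r < s)
    (i j : ℕ) :
    HasSum (fun x : ℕ =>
        (-(1 / (lam x : ℂ)) * ((2 * (Real.pi : ℂ) * Complex.I)⁻¹ *
            ∮ w in C(0, R), psiF lam x w * w ^ i * Complex.exp (-(t : ℂ) * w))) *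
        ((2 * (Real.pi : ℂ) * Complex.I)⁻¹ *
            ∮ u in C(0, r), pF lam x u * Complex.exp ((t : ℂ) * u) * u ^ (-((j : ℤ) + 1))))
      (if i = j then 1 else 0) ∧
    Summable (fun x : ℕ =>
        ‖(-(1 / (lam x : ℂ)) * ((2 * (Real.pi : ℂ) * Complex.I)⁻¹ *
            ∮ w in C(0, R), psiF lam x w * w ^ i * Complex.exp (-(t : ℂ) * w))) *
        ((2 * (Real.pi : ℂ) * Complex.I)⁻¹ *
            ∮ u in C(0, r), pF lam x u * Complex.exp ((t : ℂ) * u) * u ^ (-((j : ℤ) + 1)))‖) := by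
  have hlam : ∀ k, 0 < lam k := fun k => hs.trans_le (hlb k)
  suffices h : HasSum _ _ from ⟨h, h.summable.norm⟩
  obtain ⟨⟨C, hC⟩, hexp⟩ := hasSum_circleIntegral_psiF_mul_pF hlam hub hr0.le hR
    (f := fun w => w ^ i * Complex.exp (-(t : ℂ) * w)) (by fun_prop)
  simp only [← mul_assoc (psiF _ _ _)] at hC hexp
  have hne : ∀ u ∈ Metric.sphere (0 : ℂ) r, u ≠ 0 := fun u hu =>
    ne_zero_of_mem_sphere hr0.ne' ⟨u, hu⟩
  have hcont : ContinuousOn (fun u : ℂ => Complex.exp ((t : ℂ) * u) * u ^ (-((j : ℤ) + 1)))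
      (Metric.sphere 0 r) := fun u hu => by
    have := continuousAt_zpow₀ u (-((j : ℤ) + 1)) (Or.inl (hne u hu))
    exact ContinuousAt.continuousWithinAt (by fun_prop)
  obtain ⟨K, hK⟩ := (isCompact_sphere (0 : ℂ) r).exists_bound_of_continuousOn hcont
  set Ψ : ℕ → ℂ := fun x => -(1 / (lam x : ℂ)) * ((2 * (Real.pi : ℂ) * Complex.I)⁻¹ *
    ∮ w in C(0, R), psiF lam x w * w ^ i * Complex.exp (-(t : ℂ) * w))
  have hsum : HasSum (fun x => ∮ u in C(0, r),
      Ψ x * pF lam x u * (Complex.exp ((t : ℂ) * u) * u ^ (-((j : ℤ) + 1))))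
      (∮ u in C(0, r), u ^ i * Complex.exp (-(t : ℂ) * u) *
        (Complex.exp ((t : ℂ) * u) * u ^ (-((j : ℤ) + 1)))) := by
    refine hasSum_circleIntegral_of_norm_le hr0.le
      (fun x => (continuousOn_const.mul (continuous_pF lam x).continuousOn).mul hcont)
      ((summable_geometric_two.mul_left C).mul_right K) (fun x u hu => ?_) fun u hu => ?_
    · have hu' : ‖u‖ = r := by simpa using hu
      rw [norm_mul]
      exact mul_le_mul (hC x u hu') (hK u hu) (norm_nonneg _) ((norm_nonneg _).trans (hC x u hu'))
    · exact (hexp u (by simpa using hu)).mul_right _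
  have hint : (∮ u in C(0, r), u ^ i * Complex.exp (-(t : ℂ) * u) *
        (Complex.exp ((t : ℂ) * u) * u ^ (-((j : ℤ) + 1)))) =
      ∮ u in C(0, r), u ^ ((i : ℤ) - j - 1) := by
    refine circleIntegral.integral_congr hr0.le fun u hu => ?_
    have hexp_mul : Complex.exp (-(t : ℂ) * u) * Complex.exp ((t : ℂ) * u) = 1 := by
      rw [← Complex.exp_add, neg_mul, neg_add_cancel, Complex.exp_zero]
    have hpow : u ^ ((i : ℤ) - j - 1) = u ^ i * u ^ (-((j : ℤ) + 1)) := by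
      rw [← zpow_natCast u i, ← zpow_add₀ (hne u hu)]
      congr 1
      ring
    simp only [hpow]
    linear_combination (u ^ i * u ^ (-((j : ℤ) + 1))) * hexp_mul
  have hfinal := hsum.mul_left (2 * (Real.pi : ℂ) * Complex.I)⁻¹
  rw [hint, two_pi_I_inv_mul_circleIntegral_zpow hr0] at hfinal
  have hij : ((i : ℤ) - j - 1 = -1) ↔ i = j := by omega
  simp only [hij] at hfinal
  refine (congrArg (HasSum · _) (funext fun x => ?_)).mpr hfinal
  simp only [mul_assoc (Ψ x), circleIntegral.integral_const_mul, mul_assoc (pF _ _ _)]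
  ring
end
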